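/- (Pringsheim's inversion theorem.) Let f : ℝ → ℝ be of bounded variation on ℝ (finite total variation over ℝ) with lim_{|x|→∞} f(x) = 0, and for s ≠ 0 let f̂(s) = lim_{X→−∞, Y→∞} ∫_X^Y e^{-ist} f(t) dt, which exists. Then for each x ∈ ℝ, (f(x−)+f(x+))/2 = (1/(2π)) · lim_{T→∞, S→0⁺} ∫_{S<|s|<T} e^{ixs} f̂(s) ds, where the double limit means: for every ε > 0 there exist M > 0 and η > 0 such that the integral over {s : S < |s| < T} is within ε of the left-hand side (times 2π) whenever T > M and 0 < S < η. -/

import Mathlib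

open Filter MeasureTheory Set Topology

lemma integral_sin_mul_exp_neg_mul (R y : ℝ) :
    ∫ x in (0 : ℝ)..R, Real.sin x * Real.exp (-(x * y)) =
      (1 + y ^ 2)⁻¹ -
        Real.exp (-(R * y)) * (Real.cos R + y * Real.sin R) * (1 + y ^ 2)⁻¹ := by
  have hpos : (1 + y ^ 2 : ℝ) ≠ 0 := by positivity
  have hderiv : ∀ x ∈ uIcc 0 R, HasDerivAt
      (fun x : ℝ => -(Real.exp (-(x * y)) * (Real.cos x + y * Real.sin x) * (1 + y ^ 2)⁻¹))
      (Real.sin x * Real.exp (-(x * y))) x := by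
    intro x _
    have h₁ : HasDerivAt (fun x : ℝ => Real.exp (-(x * y))) (Real.exp (-(x * y)) * -(1 * y)) x :=
      (((hasDerivAt_id x).mul_const y).neg).exp
    have h₂ : HasDerivAt (fun x : ℝ => Real.cos x + y * Real.sin x)
        (-Real.sin x + y * Real.cos x) x :=
      (Real.hasDerivAt_cos x).add ((Real.hasDerivAt_sin x).const_mul y)
    refine ((h₁.mul h₂).mul_const (1 + y ^ 2)⁻¹).neg.congr_deriv ?_
    field_simp
    ring
  rw [intervalIntegral.integral_eq_sub_of_hasDerivAt hderiv
    (Continuous.intervalIntegrable (by fun_prop) _ _)]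
  simp
  ring

lemma integral_Ioi_const_mul_exp_neg_mul {x : ℝ} (hx : 0 < x) (c : ℝ) :
    ∫ y in Ioi (0 : ℝ), c * Real.exp (-(x * y)) = c / x := by
  have h := integral_exp_mul_Ioi (a := -x) (by linarith) 0
  simp only [neg_mul, mul_zero, Real.exp_zero] at h
  rw [integral_const_mul, h, neg_div_neg_eq, mul_one_div]

lemma abs_exp_mul_cos_add_mul_sin_le (R : ℝ) {y : ℝ} (hy : 0 < y) :
    |Real.exp (-(R * y)) * (Real.cos R + y * Real.sin R) * (1 + y ^ 2)⁻¹| ≤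
      2 * Real.exp (-(R * y)) := by
  have h₁ : |Real.cos R + y * Real.sin R| ≤ 1 + y := by
    refine (abs_add_le _ _).trans (add_le_add (Real.abs_cos_le_one R) ?_)
    rw [abs_mul, abs_of_pos hy]
    exact mul_le_of_le_one_right hy.le (Real.abs_sin_le_one R)
  have h₂ : (1 + y) * (1 + y ^ 2)⁻¹ ≤ 2 := by
    rw [← div_eq_mul_inv, div_le_iff₀ (by positivity)]
    nlinarith [sq_nonneg (y - 1)]
  rw [abs_mul, abs_mul, Real.abs_exp, abs_of_pos (show 0 < (1 + y ^ 2)⁻¹ by positivity), mul_assoc]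
  have h₃ : |Real.cos R + y * Real.sin R| * (1 + y ^ 2)⁻¹ ≤ (1 + y) * (1 + y ^ 2)⁻¹ := by gcongr
  nlinarith [Real.exp_pos (-(R * y))]

lemma integrableOn_exp_neg_mul_Ioi {R : ℝ} (hR : 0 < R) :
    IntegrableOn (fun y : ℝ => Real.exp (-(R * y))) (Ioi 0) := by
  simpa using integrableOn_exp_mul_Ioi (a := -R) (by linarith) 0

lemma integral_sinc_eq {R : ℝ} (hR : 0 < R) :
    ∫ x in (0 : ℝ)..R, Real.sinc x = Real.pi / 2 - ∫ y in Ioi (0 : ℝ),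
      Real.exp (-(R * y)) * (Real.cos R + y * Real.sin R) * (1 + y ^ 2)⁻¹ := by
  have hinv : IntegrableOn (fun y : ℝ => (1 + y ^ 2)⁻¹) (Ioi 0) :=
    integrable_inv_one_add_sq.integrableOn
  have hrem : IntegrableOn (fun y : ℝ =>
      Real.exp (-(R * y)) * (Real.cos R + y * Real.sin R) * (1 + y ^ 2)⁻¹) (Ioi 0) := by
    refine ((integrableOn_exp_neg_mul_Ioi hR).const_mul 2).mono' ?_ ?_
    · exact Measurable.aestronglyMeasurable (by fun_prop)
    · filter_upwards [ae_restrict_mem measurableSet_Ioi] with y hy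
      exact abs_exp_mul_cos_add_mul_sin_le R hy
  have hint : Integrable (Function.uncurry fun x y : ℝ => Real.sin x * Real.exp (-(x * y)))
      ((volume.restrict (uIoc 0 R)).prod (volume.restrict (Ioi 0))) := by
    rw [uIoc_of_le hR.le, integrable_prod_iff]
    · constructor
      · filter_upwards [ae_restrict_mem measurableSet_Ioc] with x hx
        exact (integrableOn_exp_neg_mul_Ioi hx.1).const_mul (Real.sin x)
      · have : IntegrableOn (fun x => |Real.sinc x|) (Ioc 0 R) :=
          ((Real.continuous_sinc.abs).integrableOn_Icc).mono_set Ioc_subset_Icc_self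
        refine this.congr ?_
        filter_upwards [ae_restrict_mem measurableSet_Ioc] with x hx
        simp only [Function.uncurry, norm_mul, Real.norm_eq_abs, Real.abs_exp]
        rw [integral_Ioi_const_mul_exp_neg_mul hx.1, Real.sinc_of_ne_zero hx.1.ne', abs_div,
          abs_of_pos hx.1]
    · exact Continuous.aestronglyMeasurable (by fun_prop)
  calc ∫ x in (0 : ℝ)..R, Real.sinc x
      = ∫ x in (0 : ℝ)..R, ∫ y in Ioi (0 : ℝ), Real.sin x * Real.exp (-(x * y)) := by
        refine intervalIntegral.integral_congr_ae (ae_of_all _ fun x hx => ?_)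
        rw [uIoc_of_le hR.le] at hx
        rw [integral_Ioi_const_mul_exp_neg_mul hx.1, Real.sinc_of_ne_zero hx.1.ne']
    _ = ∫ y in Ioi (0 : ℝ), ∫ x in (0 : ℝ)..R, Real.sin x * Real.exp (-(x * y)) :=
        intervalIntegral_integral_swap hint
    _ = _ := by
        simp_rw [integral_sin_mul_exp_neg_mul]
        rw [integral_sub hinv hrem, integral_Ioi_inv_one_add_sq]
        simp

lemma abs_integral_sinc_sub_le {R : ℝ} (hR : 0 < R) :
    |(∫ x in (0 : ℝ)..R, Real.sinc x) - Real.pi / 2| ≤ 2 / R := by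
  rw [integral_sinc_eq hR, sub_sub_cancel_left, abs_neg, ← Real.norm_eq_abs]
  rw [← integral_Ioi_const_mul_exp_neg_mul hR]
  refine norm_integral_le_of_norm_le ((integrableOn_exp_neg_mul_Ioi hR).const_mul 2) ?_
  filter_upwards [ae_restrict_mem measurableSet_Ioi] with y hy
  exact abs_exp_mul_cos_add_mul_sin_le R hy

lemma integral_sinc_neg (R : ℝ) :
    ∫ x in (0 : ℝ)..(-R), Real.sinc x = -∫ x in (0 : ℝ)..R, Real.sinc x := by
  have h := intervalIntegral.integral_comp_neg (a := 0) (b := R) Real.sinc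
  simp only [Real.sinc_neg, neg_zero] at h
  rw [h, intervalIntegral.integral_symm]

/-- The **Dirichlet integral**. -/
lemma tendsto_integral_sinc_atTop :
    Tendsto (fun R : ℝ => ∫ x in (0 : ℝ)..R, Real.sinc x) atTop (𝓝 (Real.pi / 2)) := by
  rw [tendsto_iff_norm_sub_tendsto_zero]
  refine squeeze_zero' (Eventually.of_forall fun _ => norm_nonneg _) ?_
    (tendsto_const_nhds.div_atTop tendsto_id (a := (2 : ℝ)))
  filter_upwards [eventually_gt_atTop 0] with R hR
  exact abs_integral_sinc_sub_le hR

lemma tendsto_integral_sinc_atBot :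
    Tendsto (fun R : ℝ => ∫ x in (0 : ℝ)..R, Real.sinc x) atBot (𝓝 (-(Real.pi / 2))) := by
  refine (tendsto_integral_sinc_atTop.comp tendsto_neg_atBot_atTop).neg.congr fun R => ?_
  simp [integral_sinc_neg]

lemma abs_integral_sinc_le (R : ℝ) : |∫ x in (0 : ℝ)..R, Real.sinc x| ≤ 4 := by
  wlog hR : 0 ≤ R generalizing R
  · have := this (-R) (by linarith)
    rwa [integral_sinc_neg, abs_neg] at this
  rcases le_or_gt R 2 with h | h
  · have := intervalIntegral.norm_integral_le_of_norm_le_const (a := 0) (b := R) (C := 1)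
      (f := Real.sinc) fun x _ => Real.abs_sinc_le_one x
    rw [Real.norm_eq_abs, sub_zero, abs_of_nonneg hR] at this
    linarith
  · have h₁ := abs_le.mp (abs_integral_sinc_sub_le (R := R) (by linarith))
    have h₂ : 2 / R ≤ 1 := by rw [div_le_one (by linarith)]; exact h.le
    have := Real.pi_lt_four
    have := Real.pi_pos
    rw [abs_le]
    constructor <;> linarith

lemma norm_exp_neg_I_mul (s t : ℝ) : ‖Complex.exp (-(Complex.I * s * t))‖ = 1 := by
  rw [show -(Complex.I * s * t) = ((-(s * t) : ℝ) : ℂ) * Complex.I by push_cast; ring]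
  exact Complex.norm_exp_ofReal_mul_I _

lemma integral_exp_neg_I_mul {s : ℝ} (hs : s ≠ 0) (a b : ℝ) :
    ∫ t in a..b, Complex.exp (-(Complex.I * s * t)) =
      (Complex.I * s)⁻¹ *
        (Complex.exp (-(Complex.I * s * a)) - Complex.exp (-(Complex.I * s * b))) := by
  have hc : -(Complex.I * s) ≠ 0 := by simp [hs]
  have h := integral_exp_mul_complex (a := a) (b := b) hc
  simp only [neg_mul] at h
  rw [h, div_neg, ← neg_div, neg_sub, div_eq_inv_mul]

lemma integral_exp_mul_indicator_Ici {s : ℝ} (hs : s ≠ 0) {X Y : ℝ} (hXY : X ≤ Y) (u : ℝ) :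
    ∫ t in X..Y, (Ici u).indicator (fun t : ℝ => Complex.exp (-(Complex.I * s * t))) t =
      (Complex.I * s)⁻¹ * ((Iic Y).indicator
        (fun u => Complex.exp (-(Complex.I * s * (max X u : ℝ)))) u -
          (Iic Y).indicator (fun _ => Complex.exp (-(Complex.I * s * Y))) u) := by
  have hae : (Ioc X Y ∩ Ici u : Set ℝ) =ᵐ[volume] (Ioc X Y ∩ Ioi u : Set ℝ) :=
    (ae_eq_refl _).inter Ioi_ae_eq_Ici.symm
  rw [intervalIntegral.integral_of_le hXY, setIntegral_indicator measurableSet_Ici,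
    setIntegral_congr_set hae, Ioc_inter_Ioi]
  by_cases hu : u ≤ Y
  · rw [← intervalIntegral.integral_of_le (max_le hXY hu), integral_exp_neg_I_mul hs,
      indicator_of_mem (mem_Iic.2 hu), indicator_of_mem (mem_Iic.2 hu)]
  · rw [Ioc_eq_empty (by simpa using fun _ => (not_le.1 hu).le),
      indicator_of_notMem (by simpa using hu), indicator_of_notMem (by simpa using hu)]
    simp

/-- Integration by parts for the distribution function of a finite measure. -/
lemma integral_exp_mul_measureReal_Iic (μ : Measure ℝ) [IsFiniteMeasure μ] {s : ℝ} (hs : s ≠ 0)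
    {X Y : ℝ} (hXY : X ≤ Y) :
    ∫ t in X..Y, Complex.exp (-(Complex.I * s * t)) * (μ.real (Iic t) : ℂ) =
      (Complex.I * s)⁻¹ * ((∫ u, (Iic Y).indicator
        (fun u => Complex.exp (-(Complex.I * s * (max X u : ℝ)))) u ∂μ) -
          Complex.exp (-(Complex.I * s * Y)) * (μ.real (Iic Y) : ℂ)) := by
  have hint : Integrable (Function.uncurry fun t u : ℝ =>
      (Ici u).indicator (fun t : ℝ => Complex.exp (-(Complex.I * s * t))) t)
      ((volume.restrict (uIoc X Y)).prod μ) := by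
    have : IsFiniteMeasure (volume.restrict (uIoc X Y)) := by
      rw [uIoc_of_le hXY]; infer_instance
    have heq : (Function.uncurry fun t u : ℝ =>
        (Ici u).indicator (fun t : ℝ => Complex.exp (-(Complex.I * s * t))) t) =
        {p : ℝ × ℝ | p.2 ≤ p.1}.indicator fun p => Complex.exp (-(Complex.I * s * p.1)) := by
      ext ⟨t, u⟩
      simp [Function.uncurry, indicator]
    rw [heq]
    refine Integrable.indicator ?_ (measurableSet_le measurable_snd measurable_fst)
    exact Integrable.of_bound (Continuous.aestronglyMeasurable (by fun_prop)) 1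
      (ae_of_all _ fun p => (norm_exp_neg_I_mul s p.1).le)
  have hmax : Integrable ((Iic Y).indicator
      fun u => Complex.exp (-(Complex.I * s * (max X u : ℝ)))) μ := by
    refine Integrable.indicator ?_ measurableSet_Iic
    exact Integrable.of_bound (Continuous.aestronglyMeasurable (by fun_prop)) 1
      (ae_of_all _ fun u => (norm_exp_neg_I_mul s _).le)
  have hconst : Integrable ((Iic Y).indicator
      fun _ => Complex.exp (-(Complex.I * s * Y))) μ :=
    (integrable_const _).indicator measurableSet_Iic
  calc ∫ t in X..Y, Complex.exp (-(Complex.I * s * t)) * (μ.real (Iic t) : ℂ)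
      = ∫ t in X..Y, ∫ u, (Ici u).indicator
          (fun t : ℝ => Complex.exp (-(Complex.I * s * t))) t ∂μ := by
        congr 1 with t
        have : (fun u => (Ici u).indicator
            (fun t : ℝ => Complex.exp (-(Complex.I * s * t))) t) =
            (Iic t).indicator fun _ => Complex.exp (-(Complex.I * s * t)) := by
          ext u
          simp [indicator]
        rw [this, integral_indicator_const _ measurableSet_Iic, Complex.real_smul, mul_comm]
    _ = ∫ u, (∫ t in X..Y, (Ici u).indicator
          (fun t : ℝ => Complex.exp (-(Complex.I * s * t))) t) ∂μ :=
        intervalIntegral_integral_swap hint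
    _ = _ := by
        simp_rw [integral_exp_mul_indicator_Ici hs hXY]
        rw [integral_const_mul, integral_sub hmax hconst,
          integral_indicator_const _ measurableSet_Iic, Complex.real_smul,
          mul_comm (μ.real (Iic Y) : ℂ)]

lemma tendsto_integral_exp_mul_measureReal_Iic (μ : Measure ℝ) [IsFiniteMeasure μ] {s : ℝ}
    (hs : s ≠ 0) :
    Tendsto (fun P : ℝ × ℝ =>
      (∫ t in P.1..P.2, Complex.exp (-(Complex.I * s * t)) * (μ.real (Iic t) : ℂ)) +
        (Complex.I * s)⁻¹ * (Complex.exp (-(Complex.I * s * P.2)) * (μ.real (Iic P.2) : ℂ)))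
      (atBot ×ˢ atTop) (𝓝 ((Complex.I * s)⁻¹ * charFun μ (-s))) := by
  have hlim : Tendsto (fun P : ℝ × ℝ => ∫ u, (Iic P.2).indicator
        (fun u => Complex.exp (-(Complex.I * s * (max P.1 u : ℝ)))) u ∂μ)
      (atBot ×ˢ atTop) (𝓝 (∫ u : ℝ, Complex.exp (-(Complex.I * s * u)) ∂μ)) := by
    refine tendsto_integral_filter_of_dominated_convergence (fun _ => 1) ?_ ?_
      (integrable_const _) ?_
    · refine Eventually.of_forall fun P => ?_
      exact (Continuous.aestronglyMeasurable (by fun_prop)).indicator measurableSet_Iic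
    · refine Eventually.of_forall fun P => ae_of_all _ fun u => ?_
      exact (norm_indicator_le_norm_self _ _).trans (norm_exp_neg_I_mul s _).le
    · refine ae_of_all _ fun u => tendsto_const_nhds.congr' ?_
      filter_upwards [(eventually_le_atBot u).prod_mk (eventually_ge_atTop u)] with P hP
      rw [indicator_of_mem (mem_Iic.2 hP.2), max_eq_right hP.1]
  have hchar : charFun μ (-s) = ∫ u : ℝ, Complex.exp (-(Complex.I * s * u)) ∂μ := by
    rw [charFun_apply_real]
    congr 1 with u
    congr 1
    push_cast
    ring
  rw [hchar]
  refine (hlim.const_mul (Complex.I * s)⁻¹).congr' ?_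
  filter_upwards [(eventually_le_atBot (0 : ℝ)).prod_mk (eventually_ge_atTop (0 : ℝ))] with P hP
  rw [integral_exp_mul_measureReal_Iic μ hs (hP.1.trans hP.2)]
  ring

lemma integral_mul_sinc_comp_mul (c S T : ℝ) :
    ∫ s in S..T, c * Real.sinc (s * c) =
      (∫ v in (0 : ℝ)..T * c, Real.sinc v) - ∫ v in (0 : ℝ)..S * c, Real.sinc v := by
  have h : ∀ a b : ℝ, IntervalIntegrable Real.sinc volume a b := fun a b =>
    Real.continuous_sinc.intervalIntegrable a b
  rw [intervalIntegral.integral_const_mul, intervalIntegral.mul_integral_comp_mul_right,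
    intervalIntegral.integral_interval_sub_left (h _ _) (h _ _)]

lemma exp_add_exp_neg_eq_mul_sinc {s : ℝ} (hs : s ≠ 0) (x u : ℝ) :
    Complex.exp (Complex.I * x * s) * ((Complex.I * s)⁻¹ * Complex.exp ((-s : ℝ) * u * Complex.I)) +
      Complex.exp (Complex.I * x * (-s : ℝ)) *
        ((Complex.I * (-s : ℝ))⁻¹ * Complex.exp ((s : ℝ) * u * Complex.I)) =
      ((2 * ((x - u) * Real.sinc (s * (x - u))) : ℝ) : ℂ) := by
  have hsC : (s : ℂ) ≠ 0 := by exact_mod_cast hs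
  have hsin : (x - u) * Real.sinc (s * (x - u)) = Real.sin (s * (x - u)) / s := by
    rcases eq_or_ne (x - u) 0 with h | h
    · simp [h]
    · rw [Real.sinc_of_ne_zero (mul_ne_zero hs h)]
      field_simp
  rw [hsin]
  push_cast
  rw [Complex.sin, mul_left_comm, ← Complex.exp_add, mul_left_comm, ← Complex.exp_add,
    show Complex.I * x * s + -s * u * Complex.I = s * (x - u) * Complex.I by ring,
    show Complex.I * x * -s + s * u * Complex.I = -(s * (x - u)) * Complex.I by ring]
  field_simp
  ring_nf
  simp only [Complex.I_sq]
  ring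

lemma intervalIntegrable_exp_mul_charFun (μ : Measure ℝ) [IsFiniteMeasure μ] (x : ℝ) {a b : ℝ}
    (h0 : (0 : ℝ) ∉ uIcc a b) :
    IntervalIntegrable (fun s : ℝ => Complex.exp (Complex.I * x * s) *
      ((Complex.I * s)⁻¹ * charFun μ (-s))) volume a b := by
  refine ContinuousOn.intervalIntegrable ?_
  have : Continuous (charFun μ) := by fun_prop
  refine ContinuousOn.mul (by fun_prop) (ContinuousOn.mul (ContinuousOn.inv₀ (by fun_prop) ?_) ?_)
  · rintro s hs
    have : s ≠ 0 := fun h => h0 (h ▸ hs)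
    simp [this]
  · exact (this.comp continuous_neg).continuousOn

lemma integral_exp_mul_charFun (μ : Measure ℝ) [IsFiniteMeasure μ] (x : ℝ) {S T : ℝ}
    (hS : 0 < S) (hST : S ≤ T) :
    (∫ s in (-T)..(-S), Complex.exp (Complex.I * x * s) * ((Complex.I * s)⁻¹ * charFun μ (-s))) +
      (∫ s in S..T, Complex.exp (Complex.I * x * s) * ((Complex.I * s)⁻¹ * charFun μ (-s))) =
      ((∫ u, 2 * ((∫ v in (0 : ℝ)..T * (x - u), Real.sinc v) -
        ∫ v in (0 : ℝ)..S * (x - u), Real.sinc v) ∂μ : ℝ) : ℂ) := by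
  have hexp : ∀ s : ℝ, Integrable (fun u : ℝ => Complex.exp (s * u * Complex.I)) μ := by
    intro s
    refine Integrable.of_bound (Continuous.aestronglyMeasurable (by fun_prop)) 1
      (ae_of_all _ fun u => ?_)
    rw [← Complex.ofReal_mul, Complex.norm_exp_ofReal_mul_I]
  have hint : Integrable (Function.uncurry fun s u : ℝ =>
      2 * ((x - u) * Real.sinc (s * (x - u)))) ((volume.restrict (uIoc S T)).prod μ) := by
    have : IsFiniteMeasure (volume.restrict (uIoc S T)) := by
      rw [uIoc_of_le hST]; infer_instance
    have hc := Real.continuous_sinc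
    refine Integrable.of_bound (Continuous.aestronglyMeasurable
      (by unfold Function.uncurry; fun_prop)) (2 * S⁻¹) ?_
    have hmem : ∀ᵐ p : ℝ × ℝ ∂((volume.restrict (uIoc S T)).prod μ), p.1 ∈ uIoc S T :=
      Measure.quasiMeasurePreserving_fst.ae (ae_restrict_mem measurableSet_uIoc)
    filter_upwards [hmem] with p hp
    rw [uIoc_of_le hST] at hp
    have hp0 : 0 < p.1 := hS.trans hp.1
    simp only [Function.uncurry, norm_mul, Real.norm_eq_abs, abs_two]
    gcongr
    rcases eq_or_ne (x - p.2) 0 with h | h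
    · simp [h, hS.le]
    · rw [Real.sinc_of_ne_zero (mul_ne_zero hp0.ne' h), abs_div, abs_mul, abs_of_pos hp0,
        mul_div_assoc', mul_comm p.1 |_|, mul_div_mul_left _ _ (abs_ne_zero.2 h), div_eq_mul_inv]
      refine (mul_le_of_le_one_left (by positivity) (Real.abs_sin_le_one _)).trans ?_
      exact inv_anti₀ hS hp.1.le
  have hneg := intervalIntegral.integral_comp_neg (a := S) (b := T) fun s : ℝ =>
    Complex.exp (Complex.I * x * s) * ((Complex.I * s)⁻¹ * charFun μ (-s))
  have hpos : (0 : ℝ) ∉ uIcc S T := by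
    rw [uIcc_of_le hST]; exact fun h => hS.not_ge h.1
  have hneg0 : (0 : ℝ) ∉ uIcc (-S) (-T) := by
    rw [uIcc_of_ge (by linarith)]; exact fun h => by linarith [h.2]
  have hI := intervalIntegrable_exp_mul_charFun μ x hpos
  have hI' := (IntervalIntegrable.iff_comp_neg).1 (intervalIntegrable_exp_mul_charFun μ x hneg0)
  simp only [neg_neg] at hI'
  simp only [neg_neg] at hneg
  rw [← hneg, add_comm, ← intervalIntegral.integral_add hI hI']
  calc _ = ∫ s in S..T, ((∫ u, 2 * ((x - u) * Real.sinc (s * (x - u))) ∂μ : ℝ) : ℂ) := by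
        refine intervalIntegral.integral_congr fun s hs => ?_
        have hs0 : s ≠ 0 := fun h => hpos (h ▸ hs)
        simp only [charFun_apply_real]
        rw [← integral_const_mul, ← integral_const_mul, ← integral_const_mul,
          ← integral_const_mul, ← integral_add (((hexp _).const_mul _).const_mul _)
          (((hexp _).const_mul _).const_mul _)]
        refine (integral_congr_ae (ae_of_all _ fun u =>
          exp_add_exp_neg_eq_mul_sinc hs0 x u)).trans ?_
        exact integral_complex_ofReal
    _ = _ := by
        rw [intervalIntegral.integral_ofReal, intervalIntegral_integral_swap hint]
        simp_rw [intervalIntegral.integral_const_mul (2 : ℝ), integral_mul_sinc_comp_mul]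

lemma tendsto_integral_sinc_mul_atTop (c : ℝ) :
    Tendsto (fun T : ℝ => ∫ v in (0 : ℝ)..T * c, Real.sinc v) atTop
      (𝓝 (Real.pi / 2 * (SignType.sign c : ℝ))) := by
  rcases lt_trichotomy c 0 with h | h | h
  · simpa [sign_neg h, Function.comp_def] using
      tendsto_integral_sinc_atBot.comp (tendsto_id.atTop_mul_const_of_neg h)
  · simp [h]
  · simpa [sign_pos h, Function.comp_def] using
      tendsto_integral_sinc_atTop.comp (tendsto_id.atTop_mul_const h)

lemma continuous_integral_sinc : Continuous fun R : ℝ => ∫ v in (0 : ℝ)..R, Real.sinc v :=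
  intervalIntegral.continuous_primitive (fun a b => Real.continuous_sinc.intervalIntegrable a b) 0

lemma tendsto_integral_exp_mul_charFun (μ : Measure ℝ) [IsFiniteMeasure μ] (x : ℝ) :
    Tendsto (fun P : ℝ × ℝ =>
      (∫ s in (-P.1)..(-P.2),
        Complex.exp (Complex.I * x * s) * ((Complex.I * s)⁻¹ * charFun μ (-s))) +
      ∫ s in P.2..P.1, Complex.exp (Complex.I * x * s) * ((Complex.I * s)⁻¹ * charFun μ (-s)))
      (atTop ×ˢ 𝓝[>] 0) (𝓝 ((Real.pi * (μ.real (Iio x) - μ.real (Ioi x)) : ℝ) : ℂ)) := by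
  have hsign : ∫ u, Real.pi * (SignType.sign (x - u) : ℝ) ∂μ =
      Real.pi * (μ.real (Iio x) - μ.real (Ioi x)) := by
    have : (fun u => (SignType.sign (x - u) : ℝ)) =
        fun u => (Iio x).indicator (fun _ => (1 : ℝ)) u - (Ioi x).indicator (fun _ => 1) u := by
      ext u
      rcases lt_trichotomy u x with h | h | h
      · simp [sign_pos (sub_pos.2 h), h, h.le]
      · simp [h]
      · simp [sign_neg (sub_neg.2 h), h, h.le]
    rw [integral_const_mul, this, integral_sub
      ((integrable_const _).indicator measurableSet_Iio)
      ((integrable_const _).indicator measurableSet_Ioi),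
      integral_indicator_const _ measurableSet_Iio, integral_indicator_const _ measurableSet_Ioi]
    simp
  rw [← hsign]
  have hcont := continuous_integral_sinc
  have hlim : Tendsto (fun P : ℝ × ℝ => ∫ u, 2 * ((∫ v in (0 : ℝ)..P.1 * (x - u), Real.sinc v) -
        ∫ v in (0 : ℝ)..P.2 * (x - u), Real.sinc v) ∂μ) (atTop ×ˢ 𝓝[>] 0)
      (𝓝 (∫ u, Real.pi * (SignType.sign (x - u) : ℝ) ∂μ)) := by
    refine tendsto_integral_filter_of_dominated_convergence (fun _ => 16) ?_ ?_
      (integrable_const _) ?_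
    · refine Eventually.of_forall fun P => Continuous.aestronglyMeasurable ?_
      exact continuous_const.mul ((hcont.comp (by fun_prop)).sub (hcont.comp (by fun_prop)))
    · refine Eventually.of_forall fun P => ae_of_all _ fun u => ?_
      rw [Real.norm_eq_abs, abs_mul, abs_two]
      have := abs_sub (∫ v in (0 : ℝ)..P.1 * (x - u), Real.sinc v)
        (∫ v in (0 : ℝ)..P.2 * (x - u), Real.sinc v)
      linarith [abs_integral_sinc_le (P.1 * (x - u)), abs_integral_sinc_le (P.2 * (x - u))]
    · refine ae_of_all _ fun u => ?_
      have h₁ := (tendsto_integral_sinc_mul_atTop (x - u)).comp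
        (tendsto_fst (f := (atTop : Filter ℝ)) (g := 𝓝[>] (0 : ℝ)))
      have h₂ : Tendsto (fun S : ℝ => ∫ v in (0 : ℝ)..S * (x - u), Real.sinc v) (𝓝[>] 0) (𝓝 0) := by
        have : Continuous fun S : ℝ => ∫ v in (0 : ℝ)..S * (x - u), Real.sinc v :=
          hcont.comp (by fun_prop)
        simpa using (this.tendsto 0).mono_left nhdsWithin_le_nhds
      have h₃ := h₂.comp (tendsto_snd (f := (atTop : Filter ℝ)) (g := 𝓝[>] (0 : ℝ)))
      have h := (h₁.sub h₃).const_mul 2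
      rwa [show 2 * (Real.pi / 2 * (SignType.sign (x - u) : ℝ) - 0) =
        Real.pi * (SignType.sign (x - u) : ℝ) by ring] at h
  refine ((Complex.continuous_ofReal.tendsto _).comp hlim).congr' ?_
  have hS : ∀ᶠ S : ℝ in 𝓝[>] 0, 0 < S ∧ S ≤ 1 := by
    filter_upwards [Ioc_mem_nhdsGT (zero_lt_one' ℝ)] with S hS using hS
  filter_upwards [(eventually_ge_atTop (1 : ℝ)).prod_mk hS] with P hP
  exact (integral_exp_mul_charFun μ x hP.2.1 (hP.2.2.trans hP.1)).symm

lemma BoundedVariationOn.ae_rightLim_eq {f : ℝ → ℝ} (hbv : BoundedVariationOn f univ) :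
    ∀ᵐ t, Function.rightLim f t = f t := by
  obtain ⟨p, q, hp, hq, rfl⟩ :=
    hbv.locallyBoundedVariationOn.exists_monotoneOn_sub_monotoneOn
  rw [monotoneOn_univ] at hp hq
  filter_upwards [hp.countable_not_continuousAt.ae_notMem volume,
    hq.countable_not_continuousAt.ae_notMem volume] with t hpt hqt
  have hc : ContinuousAt (p - q) t := (not_not.1 hpt).sub (not_not.1 hqt)
  exact rightLim_eq_of_tendsto (hc.tendsto.mono_left nhdsWithin_le_nhds)

/-- A function of bounded variation vanishing at `±∞` is, up to a null set, the difference of the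
distribution functions of two finite measures, which also record its one-sided limits. -/
lemma BoundedVariationOn.exists_measure_sub_measure {f : ℝ → ℝ}
    (hbv : BoundedVariationOn f univ) (htop : Tendsto f atTop (𝓝 0))
    (hbot : Tendsto f atBot (𝓝 0)) :
    ∃ μ ν : Measure ℝ, IsFiniteMeasure μ ∧ IsFiniteMeasure ν ∧
      (∀ t, μ.real (Iic t) - ν.real (Iic t) = Function.rightLim f t) ∧
      (∀ t, μ.real (Iio t) - ν.real (Iio t) = Function.leftLim f t) ∧
      ∀ t, μ.real (Ioi t) - ν.real (Ioi t) = -Function.rightLim f t := by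
  let j := SignedMeasure.toJordanDecomposition hbv.vectorMeasure
  have hj : ∀ s, MeasurableSet s → j.posPart.real s - j.negPart.real s = hbv.vectorMeasure s := by
    intro s hs
    conv_rhs => rw [← SignedMeasure.toSignedMeasure_toJordanDecomposition hbv.vectorMeasure]
    rw [JordanDecomposition.toSignedMeasure, sub_apply,
      Measure.toSignedMeasure_apply_measurable hs, Measure.toSignedMeasure_apply_measurable hs]
  refine ⟨j.posPart, j.negPart, inferInstance, inferInstance, fun t => ?_, fun t => ?_,
    fun t => ?_⟩
  · rw [hj _ measurableSet_Iic, hbv.vectorMeasure_Iic, hbot.limUnder_eq, sub_zero]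
  · rw [hj _ measurableSet_Iio, hbv.vectorMeasure_Iio, hbot.limUnder_eq, sub_zero]
  · rw [hj _ measurableSet_Ioi, hbv.vectorMeasure_Ioi, htop.limUnder_eq, zero_sub]

lemma intervalIntegrable_exp_mul_measureReal_Iic (μ : Measure ℝ) [IsFiniteMeasure μ]
    (s a b : ℝ) :
    IntervalIntegrable (fun t : ℝ => Complex.exp (-(Complex.I * s * t)) * (μ.real (Iic t) : ℂ))
      volume a b := by
  have hmono : Monotone fun t => μ.real (Iic t) := fun t u h =>
    measureReal_mono (Iic_subset_Iic.2 h)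
  have hint : IntervalIntegrable (fun t => (μ.real (Iic t) : ℂ)) volume a b :=
    have h := hmono.intervalIntegrable (μ := volume) (a := a) (b := b)
    ⟨h.1.ofReal, h.2.ofReal⟩
  exact hint.continuousOn_mul (by fun_prop)

lemma tendsto_integral_exp_mul_of_ae_eq {f : ℝ → ℝ} (μ ν : Measure ℝ) [IsFiniteMeasure μ]
    [IsFiniteMeasure ν] (hf : ∀ᵐ t, f t = μ.real (Iic t) - ν.real (Iic t))
    (hlim : Tendsto (fun t => μ.real (Iic t) - ν.real (Iic t)) atTop (𝓝 0)) {s : ℝ} (hs : s ≠ 0) :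
    Tendsto (fun P : ℝ × ℝ =>
        ∫ t in P.1..P.2, Complex.exp (-(Complex.I * s * t)) * ((f t : ℝ) : ℂ))
      (atBot ×ˢ atTop)
      (𝓝 ((Complex.I * s)⁻¹ * charFun μ (-s) - (Complex.I * s)⁻¹ * charFun ν (-s))) := by
  have hbdry : Tendsto (fun P : ℝ × ℝ => (Complex.I * s)⁻¹ * (Complex.exp (-(Complex.I * s * P.2)) *
      ((μ.real (Iic P.2) - ν.real (Iic P.2) : ℝ) : ℂ))) (atBot ×ˢ atTop) (𝓝 0) := by
    have h : Tendsto (fun Y : ℝ => Complex.exp (-(Complex.I * s * Y)) *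
        ((μ.real (Iic Y) - ν.real (Iic Y) : ℝ) : ℂ)) atTop (𝓝 0) := by
      rw [tendsto_zero_iff_norm_tendsto_zero]
      simpa only [norm_mul, norm_exp_neg_I_mul, one_mul, Complex.norm_real, norm_zero]
        using hlim.norm
    simpa using (h.comp tendsto_snd).const_mul (Complex.I * s)⁻¹
  have h := ((tendsto_integral_exp_mul_measureReal_Iic μ hs).sub
    (tendsto_integral_exp_mul_measureReal_Iic ν hs)).sub hbdry
  rw [sub_zero] at h
  refine h.congr fun P => ?_
  have hcongr : ∫ t in P.1..P.2, Complex.exp (-(Complex.I * s * t)) * ((f t : ℝ) : ℂ) =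
      ∫ t in P.1..P.2, (Complex.exp (-(Complex.I * s * t)) * (μ.real (Iic t) : ℂ) -
        Complex.exp (-(Complex.I * s * t)) * (ν.real (Iic t) : ℂ)) := by
    refine intervalIntegral.integral_congr_ae ?_
    filter_upwards [hf] with t ht _
    rw [ht]
    push_cast
    ring
  rw [hcongr, intervalIntegral.integral_sub (intervalIntegrable_exp_mul_measureReal_Iic μ s _ _)
    (intervalIntegrable_exp_mul_measureReal_Iic ν s _ _)]
  push_cast
  ring

/-- Pringsheim's inversion theorem: `f` of bounded variation on `ℝ` with limit `0` at `±∞`,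
`F s = f̂(s)` the improper-integral Fourier transform (for `s ≠ 0`).  Then for each `x`,
`(f(x-)+f(x+))/2 = (1/(2π)) lim_{T→∞, S→0⁺} ∫_{S<|s|<T} e^{ixs} f̂(s) ds`, where the
integral over `{S<|s|<T}` is `∫_{-T}^{-S} + ∫_S^T`. -/
theorem pringsheim_fourier_inversion (f : ℝ → ℝ)
    (hbv : BoundedVariationOn f Set.univ)
    (htop : Filter.Tendsto f Filter.atTop (nhds 0))
    (hbot : Filter.Tendsto f Filter.atBot (nhds 0))
    (F : ℝ → ℂ)
    (hF : ∀ s : ℝ, s ≠ 0 → Filter.Tendsto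
      (fun P : ℝ × ℝ =>
        ∫ t in P.1..P.2, Complex.exp (-(Complex.I * s * t)) * ((f t : ℝ) : ℂ))
      (Filter.atBot ×ˢ Filter.atTop) (nhds (F s)))
    (x fl fr : ℝ)
    (hfl : Filter.Tendsto f (nhdsWithin x (Set.Iio x)) (nhds fl))
    (hfr : Filter.Tendsto f (nhdsWithin x (Set.Ioi x)) (nhds fr)) :
    Filter.Tendsto
      (fun P : ℝ × ℝ => (1 / (2 * (Real.pi : ℂ))) *
        ((∫ s in (-P.1)..(-P.2), Complex.exp (Complex.I * x * s) * F s) +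
          ∫ s in P.2..P.1, Complex.exp (Complex.I * x * s) * F s))
      (Filter.atTop ×ˢ nhdsWithin 0 (Set.Ioi 0))
      (nhds (((fl + fr) / 2 : ℝ) : ℂ)) := by
  obtain ⟨μ, ν, hμ, hν, hIic, hIio, hIoi⟩ := hbv.exists_measure_sub_measure htop hbot
  have hae : ∀ᵐ t, f t = μ.real (Iic t) - ν.real (Iic t) := by
    filter_upwards [hbv.ae_rightLim_eq] with t ht
    rw [hIic, ht]
  have hlim : Tendsto (fun t => μ.real (Iic t) - ν.real (Iic t)) atTop (𝓝 0) := by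
    simp_rw [hIic]
    exact tendsto_rightLim_atTop_of_tendsto htop
  have hFeq : ∀ s : ℝ, s ≠ 0 →
      F s = (Complex.I * s)⁻¹ * charFun μ (-s) - (Complex.I * s)⁻¹ * charFun ν (-s) :=
    fun s hs => tendsto_nhds_unique (hF s hs) (tendsto_integral_exp_mul_of_ae_eq μ ν hae hlim hs)
  have hsplit : ∀ a b : ℝ, (0 : ℝ) ∉ uIcc a b →
      ∫ s in a..b, Complex.exp (Complex.I * x * s) * F s =
        (∫ s in a..b, Complex.exp (Complex.I * x * s) * ((Complex.I * s)⁻¹ * charFun μ (-s))) -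
        ∫ s in a..b, Complex.exp (Complex.I * x * s) * ((Complex.I * s)⁻¹ * charFun ν (-s)) := by
    intro a b hab
    rw [← intervalIntegral.integral_sub (intervalIntegrable_exp_mul_charFun μ x hab)
      (intervalIntegrable_exp_mul_charFun ν x hab)]
    refine intervalIntegral.integral_congr fun s hs => ?_
    rw [hFeq s fun h => hab (h ▸ hs), mul_sub]
  have hvalue : (1 / (2 * (Real.pi : ℂ))) *
      (((Real.pi * (μ.real (Iio x) - μ.real (Ioi x)) : ℝ) : ℂ) -
        ((Real.pi * (ν.real (Iio x) - ν.real (Ioi x)) : ℝ) : ℂ)) = (((fl + fr) / 2 : ℝ) : ℂ) := by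
    have hl := hIio x
    have hr := hIoi x
    rw [leftLim_eq_of_tendsto hfl] at hl
    rw [rightLim_eq_of_tendsto hfr] at hr
    have hπ : (Real.pi : ℂ) ≠ 0 := by exact_mod_cast Real.pi_ne_zero
    rw [← hl, show fr = -(μ.real (Ioi x) - ν.real (Ioi x)) by rw [hr, neg_neg]]
    push_cast
    field_simp
    ring
  rw [← hvalue]
  refine (((tendsto_integral_exp_mul_charFun μ x).sub
    (tendsto_integral_exp_mul_charFun ν x)).const_mul _).congr' ?_
  have hpos : ∀ᶠ S : ℝ in 𝓝[>] 0, 0 < S := eventually_mem_nhdsWithin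
  filter_upwards [(eventually_gt_atTop (0 : ℝ)).prod_mk hpos] with P ⟨hT, hS⟩
  rw [hsplit (-P.1) (-P.2) fun h => by
      rcases mem_uIcc.1 h with h | h <;> linarith [h.1, h.2],
    hsplit P.2 P.1 fun h => by rcases mem_uIcc.1 h with h | h <;> linarith [h.1, h.2]]
  ring
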